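/- Let θ(z) = z₁z₂ on D². (a) The two-parametric system with state space X = ℂ, input and output spaces ℂ, given by A₁ = A₂ = 0, B₁ = 0, B₂ = 1, C₁ = 1, C₂ = 0, D₁ = D₂ = 0, is a closely connected conservative scattering LSDS (the 2×2 matrix ζG = [[0, ζ₂],[ζ₁, 0]] is unitary for all ζ ∈ T²) whose transfer function is θ. (b) The two-parametric system with state space X′ = ℂ³ given by A₁′ = [[0,0,−1/√2],[0,0,0],[0,1/√2,0]], B₁′ = (1/√2, 0, 0)ᵀ, C₁′ = (0, 1/√2, 0), D₁′ = 0, A₂′ = [[0,0,0],[0,0,1/√2],[−1/√2,0,0]], B₂′ = (0, 1/√2, 0)ᵀ, C₂′ = (1/√2, 0, 0), D₂′ = 0, is also a closely connected conservative scattering LSDS whose transfer function is θ. Consequently, closely connected conservative realizations of one and the same function in the generalized Schur class can have non-isomorphic state spaces (here of dimensions 1 and 3). -/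

import Mathlib

open ContinuousLinearMap

noncomputable section

/-- The block operator `[[A, B], [C, D]] : X ⊕ N⁻ → X ⊕ N⁺` (Hilbert space direct sum). -/
def blockOp {X Nm Np : Type*}
    [NormedAddCommGroup X] [InnerProductSpace ℂ X]
    [NormedAddCommGroup Nm] [InnerProductSpace ℂ Nm]
    [NormedAddCommGroup Np] [InnerProductSpace ℂ Np]
    (A : X →L[ℂ] X) (B : Nm →L[ℂ] X) (C : X →L[ℂ] Np) (D : Nm →L[ℂ] Np) :
    WithLp 2 (X × Nm) →L[ℂ] WithLp 2 (X × Np) :=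
  ((WithLp.prodContinuousLinearEquiv 2 ℂ X Np).symm :
      (X × Np) →L[ℂ] WithLp 2 (X × Np)) ∘L
    ((A ∘L ContinuousLinearMap.fst ℂ X Nm + B ∘L ContinuousLinearMap.snd ℂ X Nm).prod
      (C ∘L ContinuousLinearMap.fst ℂ X Nm + D ∘L ContinuousLinearMap.snd ℂ X Nm)) ∘L
    (WithLp.prodContinuousLinearEquiv 2 ℂ X Nm : WithLp 2 (X × Nm) →L[ℂ] (X × Nm))

/-- A bounded operator between Hilbert spaces is unitary: `G*G = I` and `GG* = I`. -/
def IsUnitaryOp {E F : Type*}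
    [NormedAddCommGroup E] [InnerProductSpace ℂ E] [CompleteSpace E]
    [NormedAddCommGroup F] [InnerProductSpace ℂ F] [CompleteSpace F]
    (G : E →L[ℂ] F) : Prop :=
  adjoint G ∘L G = ContinuousLinearMap.id ℂ E ∧
    G ∘L adjoint G = ContinuousLinearMap.id ℂ F

/-- Close connectedness of a multiparametric system. -/
def CloselyConnectedN {Nn : ℕ} {X Nm Np : Type*}
    [NormedAddCommGroup X] [InnerProductSpace ℂ X] [CompleteSpace X]
    [NormedAddCommGroup Nm] [InnerProductSpace ℂ Nm] [CompleteSpace Nm]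
    [NormedAddCommGroup Np] [InnerProductSpace ℂ Np] [CompleteSpace Np]
    (A : Fin Nn → (X →L[ℂ] X)) (B : Fin Nn → (Nm →L[ℂ] X))
    (C : Fin Nn → (X →L[ℂ] Np)) : Prop :=
  (Submodule.span ℂ {x : X | ∃ (w : List (Fin Nn × Bool)) (y : X),
      ((∃ k u, y = B k u) ∨ (∃ j v, y = adjoint (C j) v)) ∧
      x = ((w.map fun p => cond p.2 (A p.1) (adjoint (A p.1))).prod) y}).topologicalClosure
    = ⊤

/-- `1/√2` as a complex number. -/
def rc : ℂ := (Real.sqrt 2 : ℂ)⁻¹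

/-- Example (a): the system on the state space `ℂ` with `A₁ = A₂ = 0`, `B₁ = 0`, `B₂ = 1`,
`C₁ = 1`, `C₂ = 0`, `D₁ = D₂ = 0`. -/
def Aex : Fin 2 → (ℂ →L[ℂ] ℂ) := ![0, 0]
def Bex : Fin 2 → (ℂ →L[ℂ] ℂ) := ![0, 1]
def Cex : Fin 2 → (ℂ →L[ℂ] ℂ) := ![1, 0]
def Dex : Fin 2 → (ℂ →L[ℂ] ℂ) := ![0, 0]

/-- Example (b): the system on the state space `ℂ³`. -/
def Aex' : Fin 2 → (EuclideanSpace ℂ (Fin 3) →L[ℂ] EuclideanSpace ℂ (Fin 3)) :=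
  ![Matrix.toEuclideanCLM (𝕜 := ℂ) !![0, 0, -rc; 0, 0, 0; 0, rc, 0],
    Matrix.toEuclideanCLM (𝕜 := ℂ) !![0, 0, 0; 0, 0, rc; -rc, 0, 0]]

def Bex' : Fin 2 → (ℂ →L[ℂ] EuclideanSpace ℂ (Fin 3)) :=
  ![(1 : ℂ →L[ℂ] ℂ).smulRight (EuclideanSpace.single 0 rc),
    (1 : ℂ →L[ℂ] ℂ).smulRight (EuclideanSpace.single 1 rc)]

def Cex' : Fin 2 → (EuclideanSpace ℂ (Fin 3) →L[ℂ] ℂ) :=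
  ![innerSL ℂ (EuclideanSpace.single 1 (starRingEnd ℂ rc)),
    innerSL ℂ (EuclideanSpace.single 0 (starRingEnd ℂ rc))]

def Dex' : Fin 2 → (ℂ →L[ℂ] ℂ) := ![0, 0]

/-!
With indices starting at `0`: in (a), `ζG (x, u) = (ζ₁ u, ζ₀ x)`; in (b), the rows pair off as
`(u ± x₂) / √2` and `(ζ₀ x₁ ± ζ₁ x₀) / √2` up to unimodular factors, so two parallelogram laws show
that `ζG` is isometric, hence unitary in finite dimension. In both examples `zA ∘ zB = 0`, so the
resolvent fixes `zB` and the transfer function collapses to `zD + zC ∘ zB`. In (b) the ranges of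
the `Bₖ` and of the `Cₖ*` miss the last coordinate, which the state operators `Aₖ` then supply.
-/

lemma mul_ne_one_of_norm_lt_one {R : Type*} [SeminormedRing R] [NormOneClass R] {a b : R}
    (ha : ‖a‖ < 1) (hb : ‖b‖ < 1) : a * b ≠ 1 := by
  intro h
  have hab : ‖a * b‖ < 1 :=
    (norm_mul_le a b).trans_lt (mul_lt_one_of_nonneg_of_lt_one_left (norm_nonneg a) ha hb.le)
  exact hab.ne (by rw [h, norm_one])

lemma ringInverse_comp_eq_of_comp_eq {𝕜 E F : Type*} [Semiring 𝕜]
    [AddCommMonoid E] [TopologicalSpace E] [ContinuousAdd E] [Module 𝕜 E]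
    [AddCommMonoid F] [TopologicalSpace F] [Module 𝕜 F]
    {T : E →L[𝕜] E} (hT : IsUnit T) {R S : F →L[𝕜] E} (h : T ∘L R = S) :
    Ring.inverse T ∘L S = R := by
  rw [← h, ← ContinuousLinearMap.comp_assoc, ← ContinuousLinearMap.mul_def,
    Ring.inverse_mul_cancel _ hT, ContinuousLinearMap.one_def, ContinuousLinearMap.id_comp]

section Systems

variable {n : ℕ} {X Nm Np : Type*}
  [NormedAddCommGroup X] [InnerProductSpace ℂ X]
  [NormedAddCommGroup Nm] [InnerProductSpace ℂ Nm]
  [NormedAddCommGroup Np] [InnerProductSpace ℂ Np]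

/-- The system `(A, B, C, D)` is conservative: `ζG` is unitary for every `ζ` in the unit torus. -/
def IsConservativeN [CompleteSpace X] [CompleteSpace Nm] [CompleteSpace Np]
    (A : Fin n → (X →L[ℂ] X)) (B : Fin n → (Nm →L[ℂ] X))
    (C : Fin n → (X →L[ℂ] Np)) (D : Fin n → (Nm →L[ℂ] Np)) : Prop :=
  ∀ ζ : Fin n → ℂ, (∀ k, ‖ζ k‖ = 1) →
    IsUnitaryOp (blockOp (∑ k, ζ k • A k) (∑ k, ζ k • B k) (∑ k, ζ k • C k) (∑ k, ζ k • D k))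

/-- The transfer function of `(A, B, C, D)` is defined at `z` and equal to `T` there. Invertibility
of `I - zA` is part of the notion, as `Ring.inverse` vanishes on non-units. -/
def HasTransferValueAt (A : Fin n → (X →L[ℂ] X)) (B : Fin n → (Nm →L[ℂ] X))
    (C : Fin n → (X →L[ℂ] Np)) (D : Fin n → (Nm →L[ℂ] Np)) (z : Fin n → ℂ)
    (T : Nm →L[ℂ] Np) : Prop :=
  IsUnit (1 - ∑ k, z k • A k) ∧
    ∑ k, z k • D k +
      (∑ k, z k • C k) ∘L (Ring.inverse (1 - ∑ k, z k • A k)) ∘L (∑ k, z k • B k) = T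

lemma blockOp_apply (A : X →L[ℂ] X) (B : Nm →L[ℂ] X) (C : X →L[ℂ] Np) (D : Nm →L[ℂ] Np)
    (x : WithLp 2 (X × Nm)) :
    blockOp A B C D x = WithLp.toLp 2 (A x.fst + B x.snd, C x.fst + D x.snd) := rfl

lemma isUnitaryOp_linearIsometryEquiv [CompleteSpace X] [CompleteSpace Np] (e : X ≃ₗᵢ[ℂ] Np) :
    IsUnitaryOp (e : X →L[ℂ] Np) := by
  rw [IsUnitaryOp, LinearIsometryEquiv.adjoint_eq_symm]
  constructor <;> ext x <;> simp

lemma isUnitaryOp_of_norm_map [FiniteDimensional ℂ X] [FiniteDimensional ℂ Np]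
    [CompleteSpace X] [CompleteSpace Np]
    (hdim : Module.finrank ℂ X = Module.finrank ℂ Np) {G : X →L[ℂ] Np}
    (hG : ∀ x, ‖G x‖ = ‖x‖) : IsUnitaryOp G :=
  isUnitaryOp_linearIsometryEquiv
    (LinearIsometry.toLinearIsometryEquiv ⟨G.toLinearMap, hG⟩ hdim)

lemma hasTransferValueAt_of_comp_eq_zero {A : Fin n → (X →L[ℂ] X)} {B : Fin n → (Nm →L[ℂ] X)}
    (C : Fin n → (X →L[ℂ] Np)) (D : Fin n → (Nm →L[ℂ] Np)) {z : Fin n → ℂ}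
    (hA : IsUnit (1 - ∑ k, z k • A k)) (hAB : (∑ k, z k • A k) ∘L (∑ k, z k • B k) = 0) :
    HasTransferValueAt A B C D z
      (∑ k, z k • D k + (∑ k, z k • C k) ∘L (∑ k, z k • B k)) := by
  refine ⟨hA, ?_⟩
  have hfix : (1 - ∑ k, z k • A k) ∘L (∑ k, z k • B k) = ∑ k, z k • B k := by
    rw [ContinuousLinearMap.sub_comp, hAB, sub_zero, ContinuousLinearMap.one_def,
      ContinuousLinearMap.id_comp]
  rw [ringInverse_comp_eq_of_comp_eq hA hfix]

theorem closelyConnectedN_iff_forall_invariant_eq_top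
    [CompleteSpace X] [CompleteSpace Nm] [CompleteSpace Np]
    {A : Fin n → (X →L[ℂ] X)} {B : Fin n → (Nm →L[ℂ] X)} {C : Fin n → (X →L[ℂ] Np)} :
    CloselyConnectedN A B C ↔
      ∀ M : Submodule ℂ X, IsClosed (M : Set X) →
        (∀ k u, B k u ∈ M) → (∀ k v, adjoint (C k) v ∈ M) →
        (∀ k, ∀ x ∈ M, A k x ∈ M) → (∀ k, ∀ x ∈ M, adjoint (A k) x ∈ M) → M = ⊤ := by
  unfold CloselyConnectedN
  set S : Set X := {x | ∃ (w : List (Fin n × Bool)) (y : X),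
    ((∃ k u, y = B k u) ∨ (∃ j v, y = adjoint (C j) v)) ∧
    x = ((w.map fun p => cond p.2 (A p.1) (adjoint (A p.1))).prod) y}
  constructor
  · intro h M hM hB hC hA hA'
    have hS : S ⊆ M := by
      rintro _ ⟨w, y, hy, rfl⟩
      induction w with
      | nil => rcases hy with ⟨k, u, rfl⟩ | ⟨j, v, rfl⟩ <;> simp [hB, hC]
      | cons p w ih =>
        rcases p with ⟨k, _ | _⟩
        · simpa using hA' k _ ih
        · simpa using hA k _ ih
    exact top_le_iff.1
      (h ▸ Submodule.topologicalClosure_minimal _ (Submodule.span_le.2 hS) hM)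
  · intro h
    have mem_of_mem_S {x : X} (hx : x ∈ S) : x ∈ (Submodule.span ℂ S).topologicalClosure :=
      Submodule.le_topologicalClosure _ (Submodule.subset_span hx)
    have invariant_of_mapsTo_S {T : X →L[ℂ] X} (hT : Set.MapsTo T S S) :
        ∀ x ∈ (Submodule.span ℂ S).topologicalClosure,
          T x ∈ (Submodule.span ℂ S).topologicalClosure :=
      fun _ hx => (Submodule.mapsTo_span (f := T.toLinearMap) hT).closure T.continuous hx
    refine h _ (Submodule.isClosed_topologicalClosure _)
      (fun k u => mem_of_mem_S ⟨[], _, .inl ⟨k, u, rfl⟩, rfl⟩)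
      (fun k v => mem_of_mem_S ⟨[], _, .inr ⟨k, v, rfl⟩, rfl⟩)
      (fun k => invariant_of_mapsTo_S ?_) (fun k => invariant_of_mapsTo_S ?_)
    · rintro _ ⟨w, y, hy, rfl⟩
      exact ⟨(k, true) :: w, y, hy, by simp⟩
    · rintro _ ⟨w, y, hy, rfl⟩
      exact ⟨(k, false) :: w, y, hy, by simp⟩

end Systems

section OneDimensional

lemma sum_smul_Aex (z : Fin 2 → ℂ) : ∑ k, z k • Aex k = 0 := by
  ext
  simp [Aex]

lemma sum_smul_Bex (z : Fin 2 → ℂ) : ∑ k, z k • Bex k = z 1 • 1 := by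
  ext
  simp [Bex]

lemma sum_smul_Cex (z : Fin 2 → ℂ) : ∑ k, z k • Cex k = z 0 • 1 := by
  ext
  simp [Cex]

lemma sum_smul_Dex (z : Fin 2 → ℂ) : ∑ k, z k • Dex k = 0 := by
  ext
  simp [Dex]

lemma blockOp_ex_apply (z : Fin 2 → ℂ) (x : WithLp 2 (ℂ × ℂ)) :
    blockOp (∑ k, z k • Aex k) (∑ k, z k • Bex k) (∑ k, z k • Cex k) (∑ k, z k • Dex k) x =
      WithLp.toLp 2 (z 1 * x.snd, z 0 * x.fst) := by
  rw [blockOp_apply, sum_smul_Aex, sum_smul_Bex, sum_smul_Cex, sum_smul_Dex]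
  simp

lemma isConservativeN_ex : IsConservativeN Aex Bex Cex Dex := by
  refine fun ζ hζ => isUnitaryOp_of_norm_map rfl fun x => ?_
  rw [blockOp_ex_apply, ← sq_eq_sq₀ (norm_nonneg _) (norm_nonneg _),
    WithLp.prod_norm_sq_eq_of_L2, WithLp.prod_norm_sq_eq_of_L2]
  simp only [WithLp.toLp_fst, WithLp.toLp_snd, norm_mul, hζ, one_mul]
  exact add_comm _ _

lemma closelyConnectedN_ex : CloselyConnectedN Aex Bex Cex := by
  refine closelyConnectedN_iff_forall_invariant_eq_top.2 fun M _ hB _ _ _ => ?_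
  exact eq_top_iff.2 fun x _ => by simpa [Bex] using hB 1 x

lemma sum_smul_Cex_comp_sum_smul_Bex (z : Fin 2 → ℂ) :
    (∑ k, z k • Cex k) ∘L (∑ k, z k • Bex k) = (z 0 * z 1) • 1 := by
  rw [sum_smul_Bex, sum_smul_Cex]
  ext
  simp [mul_comm]

lemma hasTransferValueAt_ex (z : Fin 2 → ℂ) :
    HasTransferValueAt Aex Bex Cex Dex z ((z 0 * z 1) • 1) := by
  have h := hasTransferValueAt_of_comp_eq_zero (A := Aex) (B := Bex) Cex Dex (z := z)
    (by rw [sum_smul_Aex, sub_zero]; exact isUnit_one)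
    (by rw [sum_smul_Aex, ContinuousLinearMap.zero_comp])
  rwa [sum_smul_Dex, zero_add, sum_smul_Cex_comp_sum_smul_Bex] at h

end OneDimensional

section ThreeDimensional

lemma rc_mul_self : rc * rc = 1 / 2 := by
  rw [rc, ← mul_inv, ← Complex.ofReal_mul, Real.mul_self_sqrt zero_le_two]
  norm_num

lemma rc_ne_zero : rc ≠ 0 := by
  simp [rc]

lemma norm_rc_sq : ‖rc‖ ^ 2 = 1 / 2 := by
  rw [← norm_pow, sq, rc_mul_self]
  norm_num

lemma norm_rc_mul_add_sq_add_norm_rc_mul_sub_sq (a b : ℂ) :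
    ‖rc * (a + b)‖ ^ 2 + ‖rc * (a - b)‖ ^ 2 = ‖a‖ ^ 2 + ‖b‖ ^ 2 := by
  rw [norm_mul, norm_mul, mul_pow, mul_pow, norm_rc_sq]
  linear_combination (1 / 2 : ℝ) * parallelogram_law_with_norm ℂ a b

lemma sum_smul_Aex' (z : Fin 2 → ℂ) : ∑ k, z k • Aex' k =
    Matrix.toEuclideanCLM (𝕜 := ℂ)
      !![0, 0, -(z 0 * rc); 0, 0, z 1 * rc; -(z 1 * rc), z 0 * rc, 0] := by
  simp only [Fin.sum_univ_two, Aex', Matrix.cons_val_zero, Matrix.cons_val_one,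
    ← map_smul, ← map_add]
  congr 1
  ext i j
  fin_cases i <;> fin_cases j <;> simp

lemma sum_smul_Aex'_apply (z : Fin 2 → ℂ) (x : EuclideanSpace ℂ (Fin 3)) :
    (∑ k, z k • Aex' k) x =
      !₂[-(z 0 * rc) * x 2, z 1 * rc * x 2, -(z 1 * rc) * x 0 + z 0 * rc * x 1] := by
  rw [sum_smul_Aex']
  ext i
  rw [Matrix.ofLp_toEuclideanCLM]
  fin_cases i <;> simp [Matrix.mulVec, dotProduct, Fin.sum_univ_three]

lemma Bex'_zero_apply (u : ℂ) : Bex' 0 u = EuclideanSpace.single 0 (rc * u) := by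
  ext i
  simp [Bex', mul_comm, PiLp.single_apply]

lemma Bex'_one_apply (u : ℂ) : Bex' 1 u = EuclideanSpace.single 1 (rc * u) := by
  ext i
  simp [Bex', mul_comm, PiLp.single_apply]

lemma Aex'_zero_single_one (a : ℂ) :
    Aex' 0 (EuclideanSpace.single 1 a) = EuclideanSpace.single 2 (rc * a) := by
  ext i
  fin_cases i <;> simp [Aex', Matrix.ofLp_toEuclideanCLM, Matrix.mulVec, dotProduct]

lemma sum_smul_Bex'_apply (z : Fin 2 → ℂ) (u : ℂ) :
    (∑ k, z k • Bex' k) u = !₂[z 0 * rc * u, z 1 * rc * u, 0] := by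
  rw [Fin.sum_univ_two, _root_.add_apply, _root_.smul_apply, _root_.smul_apply,
    Bex'_zero_apply, Bex'_one_apply]
  ext i
  fin_cases i <;> simp [mul_assoc]

lemma sum_smul_Cex'_apply (z : Fin 2 → ℂ) (x : EuclideanSpace ℂ (Fin 3)) :
    (∑ k, z k • Cex' k) x = z 0 * rc * x 1 + z 1 * rc * x 0 := by
  simp only [Fin.sum_univ_two, Cex', Matrix.cons_val_zero, Matrix.cons_val_one, _root_.add_apply,
    _root_.smul_apply, innerSL_apply_apply, EuclideanSpace.inner_single_left, Complex.conj_conj,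
    smul_eq_mul]
  ring

lemma sum_smul_Dex' (z : Fin 2 → ℂ) : ∑ k, z k • Dex' k = 0 := by
  ext
  simp [Dex']

lemma blockOp_ex'_apply (z : Fin 2 → ℂ) (x : WithLp 2 (EuclideanSpace ℂ (Fin 3) × ℂ)) :
    blockOp (∑ k, z k • Aex' k) (∑ k, z k • Bex' k) (∑ k, z k • Cex' k) (∑ k, z k • Dex' k) x =
      WithLp.toLp 2
        (!₂[z 0 * (rc * (x.snd - x.fst 2)), z 1 * (rc * (x.snd + x.fst 2)),
            rc * (z 0 * x.fst 1 - z 1 * x.fst 0)],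
          rc * (z 0 * x.fst 1 + z 1 * x.fst 0)) := by
  rw [blockOp_apply, sum_smul_Aex'_apply, sum_smul_Bex'_apply, sum_smul_Cex'_apply, sum_smul_Dex']
  congr 2
  · ext i
    fin_cases i <;>
      simp only [Fin.zero_eta, Fin.mk_one, Fin.reduceFinMk, PiLp.add_apply, Matrix.cons_val] <;>
      ring
  · rw [_root_.zero_apply]
    ring

lemma isConservativeN_ex' : IsConservativeN Aex' Bex' Cex' Dex' := by
  refine fun ζ hζ => isUnitaryOp_of_norm_map rfl fun x => ?_
  have hu := norm_rc_mul_add_sq_add_norm_rc_mul_sub_sq x.snd (x.fst 2)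
  have hy := norm_rc_mul_add_sq_add_norm_rc_mul_sub_sq (ζ 0 * x.fst 1) (ζ 1 * x.fst 0)
  rw [norm_mul (ζ 0), norm_mul (ζ 1), hζ, hζ, one_mul, one_mul] at hy
  rw [← sq_eq_sq₀ (norm_nonneg _) (norm_nonneg _), blockOp_ex'_apply,
    WithLp.prod_norm_sq_eq_of_L2, WithLp.prod_norm_sq_eq_of_L2, EuclideanSpace.norm_sq_eq,
    EuclideanSpace.norm_sq_eq, Fin.sum_univ_three, Fin.sum_univ_three]
  simp only [WithLp.toLp_fst, WithLp.toLp_snd, Matrix.cons_val, norm_mul (ζ _), hζ, one_mul]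
  linear_combination hu + hy

lemma closelyConnectedN_ex' : CloselyConnectedN Aex' Bex' Cex' := by
  refine closelyConnectedN_iff_forall_invariant_eq_top.2 fun M _ hB _ hA _ => ?_
  refine eq_top_iff.2 fun x _ => ?_
  have hx : x = Bex' 0 (rc⁻¹ * x 0) + Bex' 1 (rc⁻¹ * x 1) +
      Aex' 0 (Bex' 1 (rc⁻¹ * (rc⁻¹ * x 2))) := by
    simp only [Bex'_zero_apply, Bex'_one_apply, Aex'_zero_single_one,
      mul_inv_cancel_left₀ rc_ne_zero]
    ext i
    fin_cases i <;> simp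
  rw [hx]
  exact add_mem (add_mem (hB 0 _) (hB 1 _)) (hA 0 _ (hB 1 _))

lemma isUnit_one_sub_sum_smul_Aex'_iff (z : Fin 2 → ℂ) :
    IsUnit (1 - ∑ k, z k • Aex' k) ↔ z 0 * z 1 ≠ 1 := by
  have hdet : Matrix.det (1 - !![0, 0, -(z 0 * rc); 0, 0, z 1 * rc;
      -(z 1 * rc), z 0 * rc, 0]) = 1 - z 0 * z 1 := by
    rw [Matrix.one_fin_three, Matrix.det_fin_three]
    simp only [Matrix.sub_apply, Matrix.of_apply, Matrix.cons_val', Matrix.cons_val]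
    linear_combination (-2 * z 0 * z 1) * rc_mul_self
  rw [sum_smul_Aex', ← map_one (Matrix.toEuclideanCLM (n := Fin 3) (𝕜 := ℂ)), ← map_sub,
    MulEquiv.isUnit_map, Matrix.isUnit_iff_isUnit_det, hdet, isUnit_iff_ne_zero, sub_ne_zero,
    ne_comm]

lemma sum_smul_Aex'_comp_sum_smul_Bex' (z : Fin 2 → ℂ) :
    (∑ k, z k • Aex' k) ∘L (∑ k, z k • Bex' k) = 0 := by
  refine ContinuousLinearMap.ext fun u => ?_
  rw [ContinuousLinearMap.comp_apply, sum_smul_Aex'_apply, sum_smul_Bex'_apply]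
  ext i
  fin_cases i <;>
    simp only [Fin.zero_eta, Fin.mk_one, Fin.reduceFinMk, Matrix.cons_val, _root_.zero_apply,
      PiLp.zero_apply] <;>
    ring

lemma sum_smul_Cex'_comp_sum_smul_Bex' (z : Fin 2 → ℂ) :
    (∑ k, z k • Cex' k) ∘L (∑ k, z k • Bex' k) = (z 0 * z 1) • 1 := by
  refine ContinuousLinearMap.ext fun u => ?_
  rw [ContinuousLinearMap.comp_apply, sum_smul_Cex'_apply, sum_smul_Bex'_apply]
  simp only [Matrix.cons_val, _root_.smul_apply, one_apply_eq_self, smul_eq_mul]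
  linear_combination (2 * z 0 * z 1 * u) * rc_mul_self

lemma hasTransferValueAt_ex' {z : Fin 2 → ℂ} (hz : z 0 * z 1 ≠ 1) :
    HasTransferValueAt Aex' Bex' Cex' Dex' z ((z 0 * z 1) • 1) := by
  have h := hasTransferValueAt_of_comp_eq_zero Cex' Dex'
    ((isUnit_one_sub_sum_smul_Aex'_iff z).2 hz) (sum_smul_Aex'_comp_sum_smul_Bex' z)
  rwa [sum_smul_Dex', zero_add, sum_smul_Cex'_comp_sum_smul_Bex'] at h

end ThreeDimensional

theorem example_nonisomorphic_closely_connected_conservative_realizations_general :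
    IsConservativeN Aex Bex Cex Dex ∧ CloselyConnectedN Aex Bex Cex ∧
    (∀ z : Fin 2 → ℂ, HasTransferValueAt Aex Bex Cex Dex z ((z 0 * z 1) • 1)) ∧
    IsConservativeN Aex' Bex' Cex' Dex' ∧ CloselyConnectedN Aex' Bex' Cex' ∧
    (∀ z : Fin 2 → ℂ, z 0 * z 1 ≠ 1 →
      HasTransferValueAt Aex' Bex' Cex' Dex' z ((z 0 * z 1) • 1)) ∧
    Module.finrank ℂ ℂ = 1 ∧ Module.finrank ℂ (EuclideanSpace ℂ (Fin 3)) = 3 :=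
  ⟨isConservativeN_ex, closelyConnectedN_ex, hasTransferValueAt_ex, isConservativeN_ex',
    closelyConnectedN_ex', fun _ => hasTransferValueAt_ex', Module.finrank_self ℂ,
    finrank_euclideanSpace_fin⟩

/-- both the one-dimensional system (a) and the three-dimensional system (b)
are closely connected conservative scattering systems with transfer function
`θ(z) = z₁ z₂` on the bidisc; hence closely connected conservative realizations of one and
the same generalized Schur class function can have non-isomorphic state spaces
(of dimensions 1 and 3). -/
theorem example_nonisomorphic_closely_connected_conservative_realizations :
    -- (a) the system on ℂ is conservative
    (∀ ζ : Fin 2 → ℂ, (∀ k, ‖ζ k‖ = 1) →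
      IsUnitaryOp
        (blockOp (∑ k, ζ k • Aex k) (∑ k, ζ k • Bex k) (∑ k, ζ k • Cex k)
          (∑ k, ζ k • Dex k))) ∧
    CloselyConnectedN Aex Bex Cex ∧
    (∀ z : Fin 2 → ℂ, (∀ k, ‖z k‖ < 1) →
      IsUnit ((1 : ℂ →L[ℂ] ℂ) - ∑ k, z k • Aex k) ∧
      ∑ k, z k • Dex k +
        (∑ k, z k • Cex k) ∘L (Ring.inverse (1 - ∑ k, z k • Aex k)) ∘L (∑ k, z k • Bex k)
        = (z 0 * z 1) • (1 : ℂ →L[ℂ] ℂ)) ∧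
    -- (b) the system on ℂ³ is conservative
    (∀ ζ : Fin 2 → ℂ, (∀ k, ‖ζ k‖ = 1) →
      IsUnitaryOp
        (blockOp (∑ k, ζ k • Aex' k) (∑ k, ζ k • Bex' k) (∑ k, ζ k • Cex' k)
          (∑ k, ζ k • Dex' k))) ∧
    CloselyConnectedN Aex' Bex' Cex' ∧
    (∀ z : Fin 2 → ℂ, (∀ k, ‖z k‖ < 1) →
      IsUnit ((1 : EuclideanSpace ℂ (Fin 3) →L[ℂ] EuclideanSpace ℂ (Fin 3))
          - ∑ k, z k • Aex' k) ∧
      ∑ k, z k • Dex' k +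
        (∑ k, z k • Cex' k) ∘L (Ring.inverse (1 - ∑ k, z k • Aex' k)) ∘L (∑ k, z k • Bex' k)
        = (z 0 * z 1) • (1 : ℂ →L[ℂ] ℂ)) ∧
    -- the two state spaces are not isomorphic
    Module.finrank ℂ ℂ = 1 ∧ Module.finrank ℂ (EuclideanSpace ℂ (Fin 3)) = 3 := by
  obtain ⟨cons, conn, transfer, cons', conn', transfer', dims⟩ :=
    example_nonisomorphic_closely_connected_conservative_realizations_general
  exact ⟨cons, conn, fun z _ => transfer z, cons', conn',
    fun z hz => transfer' z (mul_ne_one_of_norm_lt_one (hz 0) (hz 1)), dims⟩
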